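/- For every index p ∈ {1,…,d}, the variance of the single-sample diagonal estimator satisfies E[ (uᵀAu·u_p² − uᵀAu − 2A_{p,p})² ] = 2·(tr(A) + 4A_{p,p})² + ‖A + Aᵀ‖² + 8·‖A_{p,:} + A_{:,p}‖² − 12·A_{p,p}². -/

import Mathlib

/-!
Gaussian expectation is a linear functional on polynomials satisfying Stein's identity
`E[uᵢ f] = E[∂ᵢ f]`. For the quadratic form `Q u = uᵀAu`, whose gradient is `(A + Aᵀ)u`, this gives
`E[Q f] = tr A · E[f] + E[⟨Au, ∇f⟩]`. Applied twice with `f` a product of `Q` and a polynomial in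
the single coordinate `uₚ`, it expresses `E[Q² w(uₚ)]` through `E[w(uₚ)]`, `E[w''(uₚ)]` and
`E[w⁗(uₚ)]`. The estimator is `Q · (uₚ² - 1)` with mean `2 Aₚₚ`, so its second moment is the case
`w = (x² - 1)²`.
-/

open MeasureTheory ProbabilityTheory Finset

noncomputable def stdGaussianVec (d : ℕ) : Measure (Fin d → ℝ) :=
  Measure.pi fun _ => gaussianReal 0 1

def quadForm {d : ℕ} (A : Matrix (Fin d) (Fin d) ℝ) (u : Fin d → ℝ) : ℝ :=
  ∑ i, ∑ j, A i j * u i * u j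

open scoped NNReal Matrix
open MvPolynomial (pderiv X C)
open Polynomial (aeval derivative)

section GaussianReal

variable (μ : ℝ) (v : ℝ≥0)

lemma hasDerivAt_gaussianPDFReal (x : ℝ) :
    HasDerivAt (gaussianPDFReal μ v) (-((x - μ) / v) * gaussianPDFReal μ v x) x := by
  have hexponent : HasDerivAt (fun y : ℝ ↦ -(y - μ) ^ 2 / (2 * v)) (-((x - μ) / v)) x := by
    refine ((((hasDerivAt_id x).sub_const μ).pow 2).neg.div_const (2 * (v : ℝ))).congr_deriv ?_
    simp only [id, Nat.cast_ofNat]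
    ring
  rw [gaussianPDFReal_def]
  exact (hexponent.exp.const_mul _).congr_deriv (by ring)

variable {μ v}

lemma integrable_gaussianReal_iff_integrable_mul {f : ℝ → ℝ} (hv : v ≠ 0) :
    Integrable f (gaussianReal μ v) ↔ Integrable fun x ↦ gaussianPDFReal μ v x * f x := by
  rw [gaussianReal_of_var_ne_zero _ hv, integrable_withDensity_iff_integrable_smul'
    (measurable_gaussianPDF _ _) (ae_of_all _ fun _ ↦ gaussianPDF_lt_top)]
  simp only [toReal_gaussianPDF, smul_eq_mul]

lemma integral_sub_mul_gaussianReal {f f' : ℝ → ℝ} (hf : ∀ x, HasDerivAt f (f' x) x)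
    (hf_int : Integrable f (gaussianReal μ v)) (hf'_int : Integrable f' (gaussianReal μ v))
    (hmul_int : Integrable (fun x ↦ (x - μ) * f x) (gaussianReal μ v)) :
    ∫ x, (x - μ) * f x ∂gaussianReal μ v = v * ∫ x, f' x ∂gaussianReal μ v := by
  rcases eq_or_ne v 0 with rfl | hv
  · simp
  have hv' : (v : ℝ) ≠ 0 := by exact_mod_cast hv
  have hderiv (x : ℝ) : HasDerivAt (fun y ↦ gaussianPDFReal μ v y * (v * f y))
      (v * (gaussianPDFReal μ v x * f' x) - gaussianPDFReal μ v x * ((x - μ) * f x)) x := by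
    refine ((hasDerivAt_gaussianPDFReal μ v x).mul ((hf x).const_mul _)).congr_deriv ?_
    field_simp
    ring
  rw [integrable_gaussianReal_iff_integrable_mul hv] at hf'_int hmul_int
  have hzero := integral_eq_zero_of_hasDerivAt_of_integrable hderiv
    ((hf'_int.const_mul _).sub hmul_int)
    ((integrable_gaussianReal_iff_integrable_mul hv).1 (hf_int.const_mul _))
  rw [integral_sub (hf'_int.const_mul _) hmul_int, integral_const_mul, sub_eq_zero] at hzero
  simp only [integral_gaussianReal_eq_integral_smul hv, smul_eq_mul]
  exact hzero.symm

lemma integrable_pow_gaussianReal (n : ℕ) : Integrable (fun x ↦ x ^ n) (gaussianReal μ v) :=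
  integrable_pow_of_mem_interior_integrableExpSet
    (by simp only [integrableExpSet_fun_id_gaussianReal, interior_univ, Set.mem_univ]) n

lemma integral_pow_succ_gaussianReal (n : ℕ) :
    ∫ x, x ^ (n + 1) ∂gaussianReal 0 v = v * n * ∫ x, x ^ (n - 1) ∂gaussianReal 0 v := by
  have hpow (x : ℝ) : x ^ (n + 1) = (x - 0) * x ^ n := by ring
  rw [mul_assoc, ← integral_const_mul, funext hpow]
  refine integral_sub_mul_gaussianReal (fun x ↦ hasDerivAt_pow n x) (integrable_pow_gaussianReal n)
    ((integrable_pow_gaussianReal _).const_mul _) ?_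
  exact (integrable_pow_gaussianReal (n + 1)).congr (ae_of_all _ hpow)

end GaussianReal

section GaussianExpectation

variable {ι : Type*} [Fintype ι]

lemma integrable_eval_pi_gaussianReal (f : MvPolynomial ι ℝ) :
    Integrable (fun u ↦ MvPolynomial.eval u f) (Measure.pi fun _ : ι ↦ gaussianReal 0 1) := by
  induction f using MvPolynomial.induction_on' with
  | monomial n a =>
    simp only [MvPolynomial.eval_monomial, Finsupp.prod_pow]
    exact (Integrable.fintype_prod_dep (f := fun i x ↦ x ^ n i)
      fun i ↦ integrable_pow_gaussianReal (n i)).const_mul a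
  | add f g hf hg =>
    simp only [map_add]
    exact hf.add hg

variable (ι) in
/-- The expectation `f ↦ E[f(u)]` for `u` a standard Gaussian vector indexed by `ι`. Restricting to
polynomials, which are all integrable, makes it a linear functional. -/
noncomputable def gaussianExpectation : MvPolynomial ι ℝ →ₗ[ℝ] ℝ where
  toFun f := ∫ u, MvPolynomial.eval u f ∂Measure.pi fun _ ↦ gaussianReal 0 1
  map_add' f g := by
    simp only [map_add]
    exact integral_add (integrable_eval_pi_gaussianReal f) (integrable_eval_pi_gaussianReal g)
  map_smul' c f := by
    simp only [MvPolynomial.smul_eval, integral_const_mul, RingHom.id_apply, smul_eq_mul]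

lemma gaussianExpectation_apply (f : MvPolynomial ι ℝ) :
    gaussianExpectation ι f = ∫ u, MvPolynomial.eval u f ∂Measure.pi fun _ ↦ gaussianReal 0 1 :=
  rfl

lemma gaussianExpectation_monomial (n : ι →₀ ℕ) (a : ℝ) :
    gaussianExpectation ι (MvPolynomial.monomial n a) =
      a * ∏ i, ∫ x, x ^ n i ∂gaussianReal 0 1 := by
  simp only [gaussianExpectation_apply, MvPolynomial.eval_monomial, Finsupp.prod_pow,
    integral_const_mul, integral_fintype_prod_eq_prod (fun i x ↦ x ^ n i)]

lemma gaussianExpectation_C (c : ℝ) : gaussianExpectation ι (C c) = c := by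
  simp only [gaussianExpectation_apply, MvPolynomial.eval_C, integral_const, probReal_univ,
    one_smul]

lemma gaussianExpectation_C_mul (c : ℝ) (f : MvPolynomial ι ℝ) :
    gaussianExpectation ι (C c * f) = c * gaussianExpectation ι f := by
  rw [MvPolynomial.C_mul', map_smul, smul_eq_mul]

lemma gaussianExpectation_sub_mean_sq (f : MvPolynomial ι ℝ) :
    gaussianExpectation ι ((f - C (gaussianExpectation ι f)) ^ 2) =
      gaussianExpectation ι (f ^ 2) - gaussianExpectation ι f ^ 2 := by
  set m := gaussianExpectation ι f with hm
  have hexpand : (f - C m) ^ 2 = f ^ 2 - C (2 * m) * f + C (m ^ 2) := by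
    simp only [map_mul, map_pow, map_ofNat]
    ring
  rw [hexpand, map_add, map_sub, gaussianExpectation_C_mul, gaussianExpectation_C, ← hm]
  ring

lemma gaussianExpectation_X_mul (i : ι) (f : MvPolynomial ι ℝ) :
    gaussianExpectation ι (X i * f) = gaussianExpectation ι (pderiv i f) := by
  classical
  induction f using MvPolynomial.induction_on' with
  | monomial n a =>
    have hoff : ∏ j ∈ univ.erase i, ∫ x, x ^ (.single i 1 + n : ι →₀ ℕ) j ∂gaussianReal 0 1 =
        ∏ j ∈ univ.erase i, ∫ x, x ^ (n - .single i 1 : ι →₀ ℕ) j ∂gaussianReal 0 1 :=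
      prod_congr rfl fun j hj ↦ by simp [Finsupp.single_eq_of_ne (ne_of_mem_erase hj)]
    have hat : ∫ x, x ^ (.single i 1 + n : ι →₀ ℕ) i ∂gaussianReal 0 1 =
        n i * ∫ x, x ^ (n - .single i 1 : ι →₀ ℕ) i ∂gaussianReal 0 1 := by
      simpa [add_comm] using integral_pow_succ_gaussianReal (v := 1) (n i)
    rw [MvPolynomial.pderiv_monomial, MvPolynomial.X, MvPolynomial.monomial_mul,
      gaussianExpectation_monomial, gaussianExpectation_monomial,
      ← mul_prod_erase _ _ (mem_univ i), ← mul_prod_erase _ _ (mem_univ i), hoff, hat]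
    ring
  | add f g hf hg => simp only [mul_add, map_add, hf, hg]

lemma gaussianExpectation_X_pow_add_two (p : ι) (n : ℕ) :
    gaussianExpectation ι (X p ^ (n + 2)) = (n + 1) * gaussianExpectation ι (X p ^ n) := by
  have hpderiv : pderiv p (X p ^ (n + 1)) = C ((n : ℝ) + 1) * X p ^ n := by
    rw [MvPolynomial.pderiv_pow, MvPolynomial.pderiv_X_self]
    simp
  rw [pow_succ', gaussianExpectation_X_mul, hpderiv, gaussianExpectation_C_mul]

lemma gaussianExpectation_aeval_quartic (p : ι) (a b c : ℝ) :
    gaussianExpectation ι (aeval (X p) (.C a * .X ^ 4 + .C b * .X ^ 2 + .C c : Polynomial ℝ)) =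
      3 * a + b + c := by
  have htwo : gaussianExpectation ι (X p ^ 2) = 1 := by
    simpa [gaussianExpectation_apply] using gaussianExpectation_X_pow_add_two p 0
  have hfour : gaussianExpectation ι (X p ^ 4) = 3 := by
    rw [gaussianExpectation_X_pow_add_two, htwo]
    norm_num
  simp only [map_add, map_mul, map_pow, Polynomial.aeval_C, Polynomial.aeval_X,
    MvPolynomial.algebraMap_eq, gaussianExpectation_C_mul, gaussianExpectation_C, htwo, hfour]
  ring

end GaussianExpectation

section PolynomialDerivatives

variable {R ι κ : Type*} [CommSemiring R]

-- The vanishing leading term keeps the quartic shape, so that the lemma can be applied repeatedly.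
lemma iterate_derivative_two_quartic (a b c : R) :
    derivative^[2] (.C a * .X ^ 4 + .C b * .X ^ 2 + .C c : Polynomial R) =
      .C 0 * .X ^ 4 + .C (12 * a) * .X ^ 2 + .C (2 * b) := by
  simp only [Function.iterate_succ_apply, Function.iterate_zero_apply, Polynomial.derivative_add,
    Polynomial.derivative_C_mul_X_pow, Polynomial.derivative_C, Polynomial.derivative_zero]
  simp only [map_zero, map_mul, map_ofNat, map_one, Nat.cast_ofNat, Nat.cast_one, Nat.reduceSub]
  ring

variable [Fintype ι]

lemma sum_mul_pderiv_aeval_X (g : ι → MvPolynomial ι R) (p : ι) (w : Polynomial R) :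
    ∑ i, g i * pderiv i (aeval (X p) w) = g p * aeval (X p) (derivative w) := by
  classical
  simp [Derivation.map_aeval, Pi.single_apply]

lemma toMvPolynomial_eq_sum_C_mul_X (A : Matrix κ ι R) (k : κ) :
    A.toMvPolynomial k = ∑ i, C (A k i) * X i := by
  simp only [Matrix.toMvPolynomial, MvPolynomial.C_mul_X_eq_monomial]

lemma pderiv_toMvPolynomial (A : Matrix κ ι R) (k : κ) (i : ι) :
    pderiv i (A.toMvPolynomial k) = C (A k i) := by
  classical
  simp [toMvPolynomial_eq_sum_C_mul_X, Pi.single_apply]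

lemma sum_C_mul_toMvPolynomial [Fintype κ] {m : Type*} (A : Matrix m κ R) (B : Matrix κ ι R)
    (k : m) : ∑ i, C (A k i) * B.toMvPolynomial i = (A * B).toMvPolynomial k := by
  simp only [Matrix.toMvPolynomial_mul, toMvPolynomial_eq_sum_C_mul_X A, map_sum, map_mul,
    MvPolynomial.bind₁_C_right, MvPolynomial.bind₁_X_right]

/-- The quadratic form `uᵀAu` as a polynomial in the coordinates of `u`. -/
noncomputable def quadPolynomial (A : Matrix ι ι R) : MvPolynomial ι R :=
  ∑ i, X i * A.toMvPolynomial i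

lemma eval_quadPolynomial (A : Matrix ι ι R) (u : ι → R) :
    MvPolynomial.eval u (quadPolynomial A) = u ⬝ᵥ A *ᵥ u := by
  simp only [quadPolynomial, map_sum, map_mul, MvPolynomial.eval_X,
    Matrix.toMvPolynomial_eval_eq_apply, dotProduct]

lemma pderiv_quadPolynomial (A : Matrix ι ι R) (i : ι) :
    pderiv i (quadPolynomial A) = (A + Aᵀ).toMvPolynomial i := by
  classical
  simp [quadPolynomial, pderiv_toMvPolynomial, sum_add_distrib, Pi.single_apply,
    Matrix.toMvPolynomial_add, toMvPolynomial_eq_sum_C_mul_X Aᵀ, mul_comm]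

lemma sum_toMvPolynomial_mul_toMvPolynomial [Fintype κ] (A B : Matrix κ ι R) :
    ∑ k, A.toMvPolynomial k * B.toMvPolynomial k = quadPolynomial (Aᵀ * B) := by
  simp only [quadPolynomial, ← sum_C_mul_toMvPolynomial, toMvPolynomial_eq_sum_C_mul_X A, sum_mul,
    mul_sum, Matrix.transpose_apply]
  rw [sum_comm]
  exact sum_congr rfl fun i _ ↦ sum_congr rfl fun k _ ↦ by ring

end PolynomialDerivatives

section QuadraticForm

variable {ι κ : Type*} [Fintype ι]

lemma gaussianExpectation_toMvPolynomial_mul (A : Matrix κ ι ℝ) (k : κ) (f : MvPolynomial ι ℝ) :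
    gaussianExpectation ι (A.toMvPolynomial k * f) =
      gaussianExpectation ι (∑ i, C (A k i) * pderiv i f) := by
  simp only [toMvPolynomial_eq_sum_C_mul_X, sum_mul, map_sum, mul_assoc,
    gaussianExpectation_C_mul, gaussianExpectation_X_mul]

lemma gaussianExpectation_quadPolynomial_mul (A : Matrix ι ι ℝ) (f : MvPolynomial ι ℝ) :
    gaussianExpectation ι (quadPolynomial A * f) = A.trace * gaussianExpectation ι f +
      gaussianExpectation ι (∑ i, A.toMvPolynomial i * pderiv i f) := by
  simp only [quadPolynomial, sum_mul, mul_assoc, map_sum, gaussianExpectation_X_mul,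
    MvPolynomial.pderiv_mul, pderiv_toMvPolynomial, map_add, gaussianExpectation_C_mul,
    sum_add_distrib, Matrix.trace, Matrix.diag]

variable (p : ι) (w : Polynomial ℝ)

lemma gaussianExpectation_toMvPolynomial_mul_aeval (A : Matrix κ ι ℝ) (k : κ) :
    gaussianExpectation ι (A.toMvPolynomial k * aeval (X p) w) =
      A k p * gaussianExpectation ι (aeval (X p) (derivative w)) := by
  rw [gaussianExpectation_toMvPolynomial_mul, sum_mul_pderiv_aeval_X, gaussianExpectation_C_mul]

lemma gaussianExpectation_quadPolynomial_mul_aeval (A : Matrix ι ι ℝ) :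
    gaussianExpectation ι (quadPolynomial A * aeval (X p) w) =
      A.trace * gaussianExpectation ι (aeval (X p) w) +
        A p p * gaussianExpectation ι (aeval (X p) (derivative^[2] w)) := by
  rw [gaussianExpectation_quadPolynomial_mul, sum_mul_pderiv_aeval_X,
    gaussianExpectation_toMvPolynomial_mul_aeval]
  rfl

lemma gaussianExpectation_toMvPolynomial_mul_quadPolynomial_mul_aeval (A : Matrix κ ι ℝ) (k : κ)
    (B : Matrix ι ι ℝ) :
    gaussianExpectation ι (A.toMvPolynomial k * (quadPolynomial B * aeval (X p) w)) =
      (A * (B + Bᵀ)) k p * gaussianExpectation ι (aeval (X p) (derivative w)) +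
        A k p * gaussianExpectation ι (quadPolynomial B * aeval (X p) (derivative w)) := by
  have hgrad : ∑ i, C (A k i) * pderiv i (quadPolynomial B * aeval (X p) w) =
      (A * (B + Bᵀ)).toMvPolynomial k * aeval (X p) w +
        C (A k p) * (quadPolynomial B * aeval (X p) (derivative w)) := by
    simp only [MvPolynomial.pderiv_mul, mul_add, sum_add_distrib, pderiv_quadPolynomial,
      ← mul_assoc, sum_mul_pderiv_aeval_X, ← sum_mul, sum_C_mul_toMvPolynomial]
  rw [gaussianExpectation_toMvPolynomial_mul, hgrad, map_add,
    gaussianExpectation_toMvPolynomial_mul_aeval, gaussianExpectation_C_mul]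

lemma gaussianExpectation_quadPolynomial_sq_mul_aeval (A : Matrix ι ι ℝ) :
    gaussianExpectation ι (quadPolynomial A ^ 2 * aeval (X p) w) =
      (A.trace ^ 2 + (Aᵀ * (A + Aᵀ)).trace) * gaussianExpectation ι (aeval (X p) w) +
      (2 * A.trace * A p p + ((A + Aᵀ) * (A + Aᵀ)) p p) *
        gaussianExpectation ι (aeval (X p) (derivative^[2] w)) +
      A p p ^ 2 * gaussianExpectation ι (aeval (X p) (derivative^[4] w)) := by
  have hgrad : ∑ i, A.toMvPolynomial i * pderiv i (quadPolynomial A * aeval (X p) w) =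
      quadPolynomial (Aᵀ * (A + Aᵀ)) * aeval (X p) w +
        A.toMvPolynomial p * (quadPolynomial A * aeval (X p) (derivative w)) := by
    simp only [MvPolynomial.pderiv_mul, mul_add, sum_add_distrib, pderiv_quadPolynomial,
      ← mul_assoc, sum_mul_pderiv_aeval_X, ← sum_mul, sum_toMvPolynomial_mul_toMvPolynomial]
  rw [sq, mul_assoc, gaussianExpectation_quadPolynomial_mul, hgrad, map_add,
    gaussianExpectation_toMvPolynomial_mul_quadPolynomial_mul_aeval]
  simp only [gaussianExpectation_quadPolynomial_mul_aeval, Matrix.add_mul, Matrix.add_apply,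
    Function.iterate_succ_apply, Function.iterate_zero_apply]
  ring

end QuadraticForm

section SymmetrizedMatrix

variable {ι R : Type*} [Fintype ι] [CommSemiring R] (A : Matrix ι ι R)

lemma add_transpose_mul_self_apply_self (i : ι) :
    ((A + Aᵀ) * (A + Aᵀ)) i i = ∑ j, (A i j + A j i) ^ 2 := by
  simp only [Matrix.mul_apply, Matrix.add_apply, Matrix.transpose_apply]
  exact sum_congr rfl fun j _ ↦ by ring

lemma two_mul_trace_transpose_mul_add_transpose :
    2 * (Aᵀ * (A + Aᵀ)).trace = ∑ i, ∑ j, (A i j + A j i) ^ 2 := by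
  have hsym : (Aᵀ * (A + Aᵀ)).trace = (A * (A + Aᵀ)).trace := by
    rw [← Matrix.trace_transpose, Matrix.transpose_mul, Matrix.trace_mul_comm,
      Matrix.transpose_add, Matrix.transpose_transpose, add_comm]
  calc 2 * (Aᵀ * (A + Aᵀ)).trace
      = (A * (A + Aᵀ)).trace + (Aᵀ * (A + Aᵀ)).trace := by rw [two_mul, ← hsym]
    _ = ((A + Aᵀ) * (A + Aᵀ)).trace := by rw [← Matrix.trace_add, ← Matrix.add_mul]
    _ = ∑ i, ∑ j, (A i j + A j i) ^ 2 :=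
      sum_congr rfl fun i _ ↦ add_transpose_mul_self_apply_self A i

end SymmetrizedMatrix

section DiagonalEstimator

variable {ι : Type*} [Fintype ι] (A : Matrix ι ι ℝ) (p : ι)

/-- The single-sample estimator `uᵀAu · uₚ² - uᵀAu` of `2 Aₚₚ`, as a polynomial in the sample `u`;
it is written as `uᵀAu · w(uₚ)` with `w = x² - 1`. -/
noncomputable def diagonalEstimator : MvPolynomial ι ℝ :=
  quadPolynomial A * aeval (X p) (.X ^ 2 - 1 : Polynomial ℝ)

lemma gaussianExpectation_diagonalEstimator :
    gaussianExpectation ι (diagonalEstimator A p) = 2 * A p p := by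
  have hweight : (.X ^ 2 - 1 : Polynomial ℝ) = .C 0 * .X ^ 4 + .C 1 * .X ^ 2 + .C (-1) := by
    simp only [map_zero, map_one, map_neg]
    ring
  rw [diagonalEstimator, hweight, gaussianExpectation_quadPolynomial_mul_aeval,
    iterate_derivative_two_quartic, gaussianExpectation_aeval_quartic,
    gaussianExpectation_aeval_quartic]
  ring

lemma gaussianExpectation_diagonalEstimator_sq :
    gaussianExpectation ι (diagonalEstimator A p ^ 2) =
      2 * (A.trace ^ 2 + (Aᵀ * (A + Aᵀ)).trace) +
      8 * (2 * A.trace * A p p + ((A + Aᵀ) * (A + Aᵀ)) p p) + 24 * A p p ^ 2 := by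
  have hweight : ((.X ^ 2 - 1) ^ 2 : Polynomial ℝ) = .C 1 * .X ^ 4 + .C (-2) * .X ^ 2 + .C 1 := by
    simp only [map_one, map_neg, map_ofNat]
    ring
  rw [diagonalEstimator, mul_pow, ← map_pow, hweight,
    gaussianExpectation_quadPolynomial_sq_mul_aeval, Function.iterate_add_apply derivative 2 2]
  simp only [iterate_derivative_two_quartic, gaussianExpectation_aeval_quartic]
  ring

theorem variance_explicit_general :
    ∫ u, ((u ⬝ᵥ A *ᵥ u) * u p ^ 2 - u ⬝ᵥ A *ᵥ u - 2 * A p p) ^ 2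
        ∂Measure.pi (fun _ : ι ↦ gaussianReal 0 1) =
      2 * (A.trace + 4 * A p p) ^ 2 + ∑ i, ∑ j, (A i j + A j i) ^ 2 +
        8 * ∑ i, (A p i + A i p) ^ 2 - 12 * A p p ^ 2 := by
  have heval (u : ι → ℝ) : (u ⬝ᵥ A *ᵥ u) * u p ^ 2 - u ⬝ᵥ A *ᵥ u - 2 * A p p =
      MvPolynomial.eval u (diagonalEstimator A p -
        C (gaussianExpectation ι (diagonalEstimator A p))) := by
    rw [gaussianExpectation_diagonalEstimator]
    simp [diagonalEstimator, eval_quadPolynomial, mul_sub]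
  simp only [heval, ← map_pow]
  rw [← gaussianExpectation_apply, gaussianExpectation_sub_mean_sq,
    gaussianExpectation_diagonalEstimator, gaussianExpectation_diagonalEstimator_sq,
    add_transpose_mul_self_apply_self, ← two_mul_trace_transpose_mul_add_transpose]
  ring

end DiagonalEstimator

theorem variance_explicit {d : ℕ} (hd : 1 ≤ d)
    (A : Matrix (Fin d) (Fin d) ℝ) (p : Fin d) :
    ∫ u, (quadForm A u * (u p) ^ 2 - quadForm A u - 2 * A p p) ^ 2
        ∂(stdGaussianVec d)
      = 2 * ((∑ i, A i i) + 4 * A p p) ^ 2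
        + (∑ i, ∑ j, (A i j + A j i) ^ 2)
        + 8 * (∑ i, (A p i + A i p) ^ 2)
        - 12 * (A p p) ^ 2 := by
  have hquad (u : Fin d → ℝ) : quadForm A u = u ⬝ᵥ A *ᵥ u := by
    simp only [quadForm, dotProduct, Matrix.mulVec, mul_sum, mul_left_comm, mul_assoc]
  simp only [hquad]
  exact variance_explicit_general A p
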